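/- arXiv:1405.7197 — 2 statements merged into one kernel-verified Lean document; each statement's English description precedes it below -/
import Mathlib

section
/- Let r ≥ 2 be an integer and let ε, α, β be reals with 0 ≤ α < ε < 1 and 0 < β < 1. If the positive integer N satisfies N ≥ ((2+α)ε/(ε−α)²)·[(r−1)·ln(2ε(2+α)(r−1)/(ε−α)²) + ln(1/β)] + (r−1)/2, then the binomial condition C(⌊αN⌋+r−1, ⌊αN⌋) · Σ_{i=0}^{⌊αN⌋+r−1} C(N,i) ε^i (1−ε)^{N−i} ≤ β holds, where ⌊·⌋ denotes the integer part and C(n,k) the binomial coefficient. -/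
/-!
Chernoff's method bounds the binomial tail up to `k + d`, where `k ≤ α N` and `d = r - 1`: tilting
by `exp (-t)` with `t = (ε - α) / ε` gives `exp (d - N (ε - α)² / (2 ε))`. The binomial
coefficient is at most `(k + 1) ^ d`, and the tangent line of the logarithm at `c d` turns this
power into `(c d) ^ d * exp ((k + 1) / c - d)` for any scale `c > 0`. The two terms `d` cancel. For
`c = 2 (2 + α) ε / (ε - α)²` the tail exponent is `d - (2 + α) N / c`, whose part `α N / c` absorbs
`k / c` and leaves `(c d) ^ d * exp (-(2 N - 1) / c)`.
-/

open Finset Real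

section OrderedSemiring

variable {R : Type*} [CommSemiring R] [PartialOrder R] [IsOrderedRing R] {x y z : R}

lemma sum_range_choose_mul_pow_le_add_pow (hx : 0 ≤ x) (hy : 0 ≤ y) (N n : ℕ) :
    ∑ i ∈ range n, (N.choose i : R) * x ^ i * y ^ (N - i) ≤ (x + y) ^ N := by
  calc ∑ i ∈ range n, (N.choose i : R) * x ^ i * y ^ (N - i)
      ≤ ∑ i ∈ range (max n (N + 1)), (N.choose i : R) * x ^ i * y ^ (N - i) :=
        sum_le_sum_of_subset_of_nonneg (range_mono (le_max_left _ _)) fun i _ _ ↦ by positivity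
    _ = ∑ i ∈ range (N + 1), (N.choose i : R) * x ^ i * y ^ (N - i) := by
        refine (sum_subset (range_mono (le_max_right _ _)) fun i _ hi ↦ ?_).symm
        have hNi : N < i := by simpa [Nat.lt_succ_iff] using hi
        simp [Nat.choose_eq_zero_of_lt hNi]
    _ = (x + y) ^ N := by
        rw [add_pow]
        exact sum_congr rfl fun i _ ↦ by ring

lemma pow_mul_sum_range_choose_mul_pow_le (hx : 0 ≤ x) (hy : 0 ≤ y) (hz0 : 0 ≤ z) (hz1 : z ≤ 1)
    (N m : ℕ) :
    z ^ m * ∑ i ∈ range (m + 1), (N.choose i : R) * x ^ i * y ^ (N - i) ≤ (x * z + y) ^ N := by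
  calc z ^ m * ∑ i ∈ range (m + 1), (N.choose i : R) * x ^ i * y ^ (N - i)
      ≤ ∑ i ∈ range (m + 1), (N.choose i : R) * (x * z) ^ i * y ^ (N - i) := by
        rw [mul_sum]
        refine sum_le_sum fun i hi ↦ ?_
        have hzi : z ^ m ≤ z ^ i :=
          pow_le_pow_of_le_one hz0 hz1 (Nat.lt_succ_iff.mp (mem_range.mp hi))
        calc z ^ m * ((N.choose i : R) * x ^ i * y ^ (N - i))
            ≤ z ^ i * ((N.choose i : R) * x ^ i * y ^ (N - i)) := by gcongr
          _ = (N.choose i : R) * (x * z) ^ i * y ^ (N - i) := by rw [mul_pow]; ring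
    _ ≤ (x * z + y) ^ N := sum_range_choose_mul_pow_le_add_pow (mul_nonneg hx hz0) hy N (m + 1)

end OrderedSemiring

lemma exp_neg_le_one_sub_add_sq_div_two {t : ℝ} (ht : 0 ≤ t) : exp (-t) ≤ 1 - t + t ^ 2 / 2 := by
  have quad_pos : 0 < 1 - t + t ^ 2 / 2 := by nlinarith [sq_nonneg (t - 1)]
  rw [exp_neg, inv_le_iff_one_le_mul₀ (exp_pos t)]
  calc 1 ≤ 1 + t ^ 4 / 4 := by linarith [pow_nonneg ht 4]
    _ = (1 - t + t ^ 2 / 2) * (1 + t + t ^ 2 / 2) := by ring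
    _ ≤ (1 - t + t ^ 2 / 2) * exp t := by gcongr; exact quadratic_le_exp_of_nonneg ht

lemma pow_le_mul_pow_mul_exp {c y : ℝ} (hc : 0 < c) (hy : 0 ≤ y) (d : ℕ) :
    y ^ d ≤ (c * d) ^ d * exp (y / c - d) := by
  rcases d.eq_zero_or_pos with rfl | hd
  · simpa using div_nonneg hy hc.le
  have le_exp : y / (c * d) ≤ exp (y / (c * d) - 1) := by
    simpa using add_one_le_exp (y / (c * d) - 1)
  calc y ^ d = (c * d) ^ d * (y / (c * d)) ^ d := by
        rw [← mul_pow, mul_div_cancel₀ y (by positivity)]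
    _ ≤ (c * d) ^ d * exp (y / (c * d) - 1) ^ d := by gcongr
    _ = (c * d) ^ d * exp (y / c - d) := by
        rw [← exp_nat_mul]
        congr 2
        field_simp

lemma choose_add_le_mul_pow_mul_exp {c : ℝ} (hc : 0 < c) (k d : ℕ) :
    ((k + d).choose k : ℝ) ≤ (c * d) ^ d * exp ((k + 1) / c - d) := by
  calc ((k + d).choose k : ℝ) ≤ ((k : ℝ) + 1) ^ d := by
        rw [Nat.choose_symm_add]
        exact_mod_cast Nat.choose_add_le_add_one_pow k d
    _ ≤ (c * d) ^ d * exp ((k + 1) / c - d) := pow_le_mul_pow_mul_exp hc (by positivity) d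

/-- The probability that a binomial random variable with `N` trials and success probability `p`
takes a value at most `m`; the bound `m` is included and may exceed `N`. -/
noncomputable def binomialLowerTail (N m : ℕ) (p : ℝ) : ℝ :=
  ∑ i ∈ range (m + 1), (N.choose i : ℝ) * p ^ i * (1 - p) ^ (N - i)

section BinomialLowerTail

variable {N k : ℕ} {p α c : ℝ}

lemma binomialLowerTail_nonneg (N m : ℕ) (hp0 : 0 ≤ p) (hp1 : p ≤ 1) :
    0 ≤ binomialLowerTail N m p := by
  have : 0 ≤ 1 - p := sub_nonneg.mpr hp1
  exact sum_nonneg fun i _ ↦ by positivity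

lemma binomialLowerTail_le_exp (N m : ℕ) (hp0 : 0 ≤ p) (hp1 : p ≤ 1) {t : ℝ} (ht : 0 ≤ t) :
    binomialLowerTail N m p ≤ exp (t * m - N * p * (t - t ^ 2 / 2)) := by
  have hq : 0 ≤ 1 - p := sub_nonneg.mpr hp1
  have mgf_le : p * exp (-t) + (1 - p) ≤ exp (-(p * (t - t ^ 2 / 2))) := by
    calc p * exp (-t) + (1 - p) ≤ p * (1 - t + t ^ 2 / 2) + (1 - p) := by
          gcongr
          exact exp_neg_le_one_sub_add_sq_div_two ht
      _ = 1 - p * (t - t ^ 2 / 2) := by ring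
      _ ≤ exp (-(p * (t - t ^ 2 / 2))) := one_sub_le_exp_neg _
  have tilted_le : exp (-t) ^ m * binomialLowerTail N m p ≤ (p * exp (-t) + (1 - p)) ^ N :=
    pow_mul_sum_range_choose_mul_pow_le hp0 hq (exp_pos _).le (exp_le_one_iff.mpr (by linarith)) N m
  calc binomialLowerTail N m p
      = exp (t * m) * (exp (-t) ^ m * binomialLowerTail N m p) := by
        rw [← mul_assoc, ← exp_nat_mul, ← exp_add, mul_neg, mul_comm t, add_neg_cancel, exp_zero,
          one_mul]
    _ ≤ exp (t * m) * exp (-(p * (t - t ^ 2 / 2))) ^ N := by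
        gcongr
        exact tilted_le.trans (by gcongr)
    _ = exp (t * m - N * p * (t - t ^ 2 / 2)) := by
        rw [← exp_nat_mul, ← exp_add]
        congr 1
        ring

lemma binomialLowerTail_add_le_exp (d : ℕ) (hα : 0 ≤ α) (hαp : α ≤ p) (hp0 : 0 < p) (hp1 : p ≤ 1)
    (hk : (k : ℝ) ≤ α * N) :
    binomialLowerTail N (k + d) p ≤ exp (d - N * (p - α) ^ 2 / (2 * p)) := by
  -- `t = (p - α) / p` minimises the exponent `t α N - N p (t - t² / 2)`.
  set t := (p - α) / p with ht_def
  have ht0 : 0 ≤ t := div_nonneg (sub_nonneg.mpr hαp) hp0.le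
  have ht1 : t ≤ 1 := (div_le_one hp0).mpr (by linarith)
  have exponent_eq : t * (α * N) - N * p * (t - t ^ 2 / 2) = -(N * (p - α) ^ 2 / (2 * p)) := by
    rw [ht_def]
    field_simp
    ring
  have htk : t * k ≤ t * (α * N) := by gcongr
  have htd : t * d ≤ d := mul_le_of_le_one_left d.cast_nonneg ht1
  refine (binomialLowerTail_le_exp N (k + d) hp0.le hp1 ht0).trans (exp_le_exp.mpr ?_)
  push_cast
  linarith

lemma choose_mul_binomialLowerTail_le (d : ℕ) (hα : 0 ≤ α) (hαp : α ≤ p) (hp0 : 0 < p)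
    (hp1 : p ≤ 1) (hk : (k : ℝ) ≤ α * N) (hcα : 2 * (2 + α) * p ≤ c * (p - α) ^ 2) :
    ((k + d).choose k : ℝ) * binomialLowerTail N (k + d) p
      ≤ (c * d) ^ d * exp (-((2 * N - 1) / c)) := by
  have hc : 0 < c :=
    pos_of_mul_pos_left ((by positivity : 0 < 2 * (2 + α) * p).trans_le hcα) (sq_nonneg _)
  have tail_rate : (2 + α) * N / c ≤ N * (p - α) ^ 2 / (2 * p) := by
    rw [div_le_div_iff₀ hc (by positivity)]
    nlinarith [mul_le_mul_of_nonneg_left hcα (Nat.cast_nonneg (α := ℝ) N)]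
  have choose_rate : (k + 1) / c ≤ (α * N + 1) / c := by gcongr
  calc ((k + d).choose k : ℝ) * binomialLowerTail N (k + d) p
      ≤ ((c * d) ^ d * exp ((k + 1) / c - d)) * exp (d - N * (p - α) ^ 2 / (2 * p)) :=
        mul_le_mul (choose_add_le_mul_pow_mul_exp hc k d)
          (binomialLowerTail_add_le_exp d hα hαp hp0 hp1 hk)
          (binomialLowerTail_nonneg _ _ hp0.le hp1) (by positivity)
    _ = (c * d) ^ d * exp ((k + 1) / c - N * (p - α) ^ 2 / (2 * p)) := by
        rw [mul_assoc, ← exp_add, sub_add_sub_cancel]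
    _ ≤ (c * d) ^ d * exp ((α * N + 1) / c - (2 + α) * N / c) := by gcongr
    _ = (c * d) ^ d * exp (-((2 * N - 1) / c)) := by
        congr 2
        ring

end BinomialLowerTail

/-- Corollary 1 (arithmetic core): the explicit sample-size bound implies the
implicit binomial condition of Theorem 1. -/
theorem stmt_0 (r N : ℕ) (ε α β : ℝ)
    (hr : 2 ≤ r) (hN : 0 < N)
    (hα : 0 ≤ α) (hαε : α < ε) (hε1 : ε < 1)
    (hβ0 : 0 < β) (hβ1 : β < 1)
    (hNbound : (N : ℝ) ≥ ((2 + α) * ε / (ε - α) ^ 2) *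
      (((r : ℝ) - 1) * Real.log (2 * ε * (2 + α) * ((r : ℝ) - 1) / (ε - α) ^ 2) +
        Real.log (1 / β)) + ((r : ℝ) - 1) / 2) :
    (Nat.choose (⌊α * (N : ℝ)⌋₊ + r - 1) ⌊α * (N : ℝ)⌋₊ : ℝ) *
      ∑ i ∈ Finset.range (⌊α * (N : ℝ)⌋₊ + r),
        (Nat.choose N i : ℝ) * ε ^ i * (1 - ε) ^ (N - i) ≤ β := by
  obtain ⟨d, rfl⟩ : ∃ d, r = d + 1 := ⟨r - 1, by omega⟩
  have hd : (1 : ℝ) ≤ d := by exact_mod_cast Nat.le_of_succ_le_succ hr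
  have hε0 : 0 < ε := hα.trans_lt hαε
  have hgap : 0 < ε - α := sub_pos.mpr hαε
  set c := 2 * ((2 + α) * ε / (ε - α) ^ 2) with hc_def
  have hc : 0 < c := by positivity
  have scale_eq : 2 * (2 + α) * ε = c * (ε - α) ^ 2 := by rw [hc_def]; field_simp
  have sample_bound : d * log (c * d) - log β ≤ (2 * N - 1) / c := by
    have log_arg : 2 * ε * (2 + α) * d / (ε - α) ^ 2 = c * d := by rw [hc_def]; ring
    have half_c : (2 + α) * ε / (ε - α) ^ 2 = c / 2 := by rw [hc_def]; ring
    rw [Nat.cast_add_one, add_sub_cancel_right, log_arg, half_c, one_div, log_inv] at hNbound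
    rw [le_div_iff₀ hc]
    linarith
  calc _ ≤ (c * d) ^ d * exp (-((2 * N - 1) / c)) :=
        choose_mul_binomialLowerTail_le d hα hαε.le hε0 hε1.le (Nat.floor_le (by positivity))
          scale_eq.le
    _ = exp (d * log (c * d) - (2 * N - 1) / c) := by
        rw [exp_sub, exp_nat_mul, exp_log (by positivity), exp_neg, ← div_eq_mul_inv]
    _ ≤ exp (log β) := exp_le_exp.mpr (by linarith)
    _ = β := exp_log hβ0
end

section
/- Let r ≥ 2 be an integer, ε, α, β reals with 0 ≤ α < ε < 1 and 0 < β < 1, and let N > 0 be a real number. If N ≥ 2(r−1)/(ε−α) + (2ε/(ε−α)²)·ln(1/β) + (2ε(r−1)/(ε−α)²)·ln(αN + r−1), then (αN+r−1)^{r−1} · exp(−((ε−α)N−(r−1))²/(2εN)) ≤ β. -/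
/-!
Taking logarithms, the conclusion says that `c := log (1 / β) + (r - 1) * log (α * N + r - 1)` is at
most `(δ * N - k) ^ 2 / (2 * ε * N)`, where `δ = ε - α` and `k = r - 1`. Dropping `k ^ 2` from the
expanded square bounds this quotient below by `δ ^ 2 / (2 * ε) * (N - 2 * k / δ)`, which is affine
in `N`, and the hypothesis on `N` says precisely that this affine bound is at least `c`.
-/

section QuadraticExponent

variable {ε δ k N c : ℝ}

lemma mul_sub_le_sq_div (hε : 0 < ε) (hδ : δ ≠ 0) (hN : 0 < N) :
    δ ^ 2 / (2 * ε) * (N - 2 * k / δ) ≤ (δ * N - k) ^ 2 / (2 * ε * N) := by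
  rw [le_div_iff₀ (by positivity)]
  calc δ ^ 2 / (2 * ε) * (N - 2 * k / δ) * (2 * ε * N)
      = (δ * N - k) ^ 2 - k ^ 2 := by field_simp; ring
    _ ≤ (δ * N - k) ^ 2 := sub_le_self _ (sq_nonneg k)

lemma le_sq_div_of_add_mul_le (hε : 0 < ε) (hδ : δ ≠ 0) (hN : 0 < N)
    (h : 2 * k / δ + 2 * ε / δ ^ 2 * c ≤ N) :
    c ≤ (δ * N - k) ^ 2 / (2 * ε * N) :=
  calc c = δ ^ 2 / (2 * ε) * (2 * ε / δ ^ 2 * c) := by field_simp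
    _ ≤ δ ^ 2 / (2 * ε) * (N - 2 * k / δ) := by
        gcongr
        exact le_sub_iff_add_le'.mpr h
    _ ≤ (δ * N - k) ^ 2 / (2 * ε * N) := mul_sub_le_sq_div hε hδ hN

end QuadraticExponent

lemma rpow_mul_exp_neg_le_iff {A β k x : ℝ} (hA : 0 < A) (hβ : 0 < β) :
    A ^ k * Real.exp (-x) ≤ β ↔ Real.log (1 / β) + k * Real.log A ≤ x := by
  have hpow : 0 < A ^ k := Real.rpow_pos_of_pos hA k
  rw [← Real.log_le_log_iff (by positivity) hβ, Real.log_mul hpow.ne' (Real.exp_ne_zero _),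
    Real.log_rpow hA, Real.log_exp, one_div, Real.log_inv]
  constructor <;> intro h <;> linarith

theorem stmt_6_general {A k ε δ β N : ℝ} (hA : 0 < A) (hε : 0 < ε) (hδ : δ ≠ 0) (hβ : 0 < β)
    (hN : 0 < N)
    (h : 2 * k / δ + 2 * ε / δ ^ 2 * Real.log (1 / β) + 2 * ε * k / δ ^ 2 * Real.log A ≤ N) :
    A ^ k * Real.exp (-(δ * N - k) ^ 2 / (2 * ε * N)) ≤ β := by
  rw [neg_div, rpow_mul_exp_neg_le_iff hA hβ]
  refine le_sq_div_of_add_mul_le hε hδ hN (le_of_eq_of_le ?_ h)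
  ring

/-- Rearrangement and exponentiation steps in the chain of implications
proving Corollary 1. -/
theorem stmt_6 (r : ℕ) (hr : 2 ≤ r) (ε α β N : ℝ)
    (hα : 0 ≤ α) (hαε : α < ε) (hε1 : ε < 1)
    (hβ0 : 0 < β) (hβ1 : β < 1) (hN : 0 < N)
    (h : N ≥ 2 * ((r : ℝ) - 1) / (ε - α) + (2 * ε / (ε - α) ^ 2) * Real.log (1 / β) +
      (2 * ε * ((r : ℝ) - 1) / (ε - α) ^ 2) * Real.log (α * N + (r : ℝ) - 1)) :
    (α * N + (r : ℝ) - 1) ^ (r - 1) *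
      Real.exp (-((ε - α) * N - ((r : ℝ) - 1)) ^ 2 / (2 * ε * N)) ≤ β := by
  have hr_cast : (2 : ℝ) ≤ r := by exact_mod_cast hr
  have base_pos : 0 < α * N + (r : ℝ) - 1 := by linarith [mul_nonneg hα hN.le]
  rw [← Real.rpow_natCast, Nat.cast_pred (by lia)]
  exact stmt_6_general base_pos (hα.trans_lt hαε) (sub_pos.mpr hαε).ne' hβ0 hN h
end
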